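/- arXiv:2011.06924 — 4 statements merged into one kernel-verified Lean document; each statement's English description precedes it below -/
import Mathlib

section
/- Let (G, μ, U) be a fuzzy subgroup and C = C(G,μ,U) its cover monoid. Then C is an inverse monoid: for every p = (u,x) ∈ C there exists a unique q ∈ C with pqp = p and qpq = q, namely q = (u, x⁻¹). -/
/-- `(G, μ, U)` is a fuzzy subgroup: `U ⊆ [0,1]`, `μ : G → U` surjective,
`μ(xy) ≥ min (μ x) (μ y)` and `μ x⁻¹ = μ x`. -/
def IsFuzzySubgroup {G : Type*} [Group G] (μ : G → ℝ) (U : Set ℝ) : Prop :=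
  U ⊆ Set.Icc (0 : ℝ) 1 ∧ (∀ x, μ x ∈ U) ∧ (∀ u ∈ U, ∃ x, μ x = u) ∧
    (∀ x y, min (μ x) (μ y) ≤ μ (x * y)) ∧ (∀ x, μ x⁻¹ = μ x)

/-- Membership in the cover monoid `C(G,μ,U) = {(u,x) ∈ U × G : u ≤ μ x}`. -/
def inCover {G : Type*} [Group G] (μ : G → ℝ) (U : Set ℝ) (p : ℝ × G) : Prop :=
  p.1 ∈ U ∧ p.1 ≤ μ p.2

/-- The multiplication `(u,x)(v,y) = (min u v, xy)` of the cover monoid. -/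
def cmul {M : Type*} [Mul M] (p q : ℝ × M) : ℝ × M :=
  (min p.1 q.1, p.2 * q.2)

/-- `C(G,μ,U)` is an inverse monoid: each `(u,x)` has a unique generalized inverse,
namely `(u, x⁻¹)`. -/
theorem stmt2 {G : Type*} [Group G] (μ : G → ℝ) (U : Set ℝ)
    (h : IsFuzzySubgroup μ U) (u : ℝ) (x : G) (hp : inCover μ U (u, x)) :
    (∃! q : ℝ × G, inCover μ U q ∧
        cmul (cmul (u, x) q) (u, x) = (u, x) ∧ cmul (cmul q (u, x)) q = q) ∧
    inCover μ U (u, x⁻¹) ∧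
    cmul (cmul (u, x) (u, x⁻¹)) (u, x) = (u, x) ∧
    cmul (cmul (u, x⁻¹) (u, x)) (u, x⁻¹) = (u, x⁻¹) := by
  have h1 : inCover μ U (u, x⁻¹) := ⟨hp.1, by
    have h2 := hp.2
    simp only at h2 ⊢
    rw [h.2.2.2.2 x]
    exact h2⟩
  have h2 : cmul (cmul (u, x) (u, x⁻¹)) (u, x) = (u, x) := by simp [cmul]
  have h3 : cmul (cmul (u, x⁻¹) (u, x)) (u, x⁻¹) = (u, x⁻¹) := by simp [cmul]
  refine ⟨⟨(u, x⁻¹), ⟨h1, h2, h3⟩, ?_⟩, h1, h2, h3⟩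
  rintro ⟨v, y⟩ ⟨-, ha, hb⟩
  simp only [cmul, Prod.mk.injEq] at ha hb ⊢
  obtain ⟨ha1, ha2⟩ := ha
  obtain ⟨hb1, -⟩ := hb
  constructor
  · apply le_antisymm
    · rw [← hb1]
      exact (min_le_left _ _).trans (min_le_right _ _)
    · rw [← ha1]
      exact (min_le_left _ _).trans (min_le_right _ _)
  · have h4 : x * y = 1 := mul_eq_right.mp ha2
    exact eq_inv_of_mul_eq_one_right h4
end

section
/- Let (G, μ, U) be a fuzzy subgroup and C = C(G,μ,U) its cover monoid. For (u,x), (v,y) ∈ C, there exists an idempotent e ∈ C with (u,x) = (v,y)·e (i.e. (u,x) lies below (v,y) in the natural partial order of the inverse monoid C) if and only if x = y and u ≤ v. -/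
/-- Natural partial order of `C(G,μ,U)`: `(u,x) ≤ (v,y)` iff `x = y` and `u ≤ v`. -/
theorem stmt4 {G : Type*} [Group G] (μ : G → ℝ) (U : Set ℝ)
    (h : IsFuzzySubgroup μ U) (u v : ℝ) (x y : G)
    (hux : inCover μ U (u, x)) (hvy : inCover μ U (v, y)) :
    (∃ e : ℝ × G, inCover μ U e ∧ cmul e e = e ∧ cmul (v, y) e = (u, x)) ↔
      x = y ∧ u ≤ v := by
  obtain ⟨-, -, -, hm, hi⟩ := h
  constructor
  · rintro ⟨⟨w, z⟩, -, he, hp⟩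
    simp only [cmul, Prod.mk.injEq] at he hp
    have hz : z = 1 := mul_eq_left.mp he.2
    refine ⟨?_, ?_⟩
    · rw [← hp.2, hz, mul_one]
    · rw [← hp.1]
      exact min_le_left _ _
  · rintro ⟨rfl, huv⟩
    have h1 : μ x ≤ μ 1 := by
      have := hm x x⁻¹
      rwa [hi, min_self, mul_inv_cancel] at this
    refine ⟨(u, 1), ⟨hux.1, le_trans hux.2 h1⟩, ?_, ?_⟩
    · simp [cmul]
    · simp [cmul, huv]
end

section
/- Let (G, μ, U) be a fuzzy subgroup and C = C(G,μ,U) its cover monoid. For (u,x), (v,y) ∈ C, there exists an idempotent e ∈ C with (u,x)·e = (v,y)·e (i.e. (u,x) and (v,y) are related by the least group congruence σ of the inverse monoid C) if and only if x = y. Moreover, for each x ∈ G the element (μ(x), x) is the greatest element of its σ-class: for every v with (v,x) ∈ C one has v ≤ μ(x). Hence C is an F-inverse monoid. -/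
/-- `σ`-relation in `C(G,μ,U)`: `(u,x) σ (v,y)` iff `x = y`; moreover `(μ x, x)` is
the greatest element of its `σ`-class, so `C(G,μ,U)` is an `F`-inverse monoid. -/
theorem stmt5 {G : Type*} [Group G] (μ : G → ℝ) (U : Set ℝ)
    (h : IsFuzzySubgroup μ U) (u v : ℝ) (x y : G)
    (hux : inCover μ U (u, x)) (hvy : inCover μ U (v, y)) :
    ((∃ e : ℝ × G, inCover μ U e ∧ cmul e e = e ∧
        cmul (u, x) e = cmul (v, y) e) ↔ x = y) ∧
    (∀ z : G, inCover μ U (μ z, z) ∧ ∀ w : ℝ, inCover μ U (w, z) → w ≤ μ z) := by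
  obtain ⟨-, hU, -, hmul, hinv⟩ := h
  refine ⟨⟨?_, ?_⟩, fun z => ⟨⟨hU z, le_refl _⟩, fun w hw => hw.2⟩⟩
  · rintro ⟨e, -, -, he⟩
    have h2 : x * e.2 = y * e.2 := congrArg Prod.snd he
    exact mul_right_cancel h2
  · rintro rfl
    have h1 : μ x ≤ μ 1 := by
      have h3 := hmul x x⁻¹
      rwa [hinv, min_self, mul_inv_cancel] at h3
    refine ⟨(min u v, 1), ⟨?_, ?_⟩, ?_, ?_⟩
    · show min u v ∈ U
      rcases min_choice u v with h4 | h4 <;> rw [h4]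
      · exact hux.1
      · exact hvy.1
    · exact (min_le_left u v).trans (hux.2.trans h1)
    · simp [cmul]
    · simp [cmul]
end

section
/- Let (G, μ₁, U) and (H, μ₂, V) be fuzzy subgroups with cover monoids C₁ = C(G,μ₁,U) and C₂ = C(H,μ₂,V), first-coordinate projections φ₁, φ₂, and let λ : U → V be an order-preserving map with λ(μ₁(1)) = μ₂(1). Suppose g : C₁ → C₂ is a monoid homomorphism such that φ₂∘g = λ∘φ₁ and g maps the greatest element of each σ-class of C₁ to the greatest element of some σ-class of C₂, i.e. for every x ∈ G there is x' ∈ H with g(μ₁(x), x) = (μ₂(x'), x'). Then there exists a group homomorphism f : G → H such that μ₂∘f = λ∘μ₁ and g(u,x) = (λ(u), f(x)) for all (u,x) ∈ C₁. (Fullness of the embedding Ω.) -/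
/-- Fullness of the embedding `Ω`: every morphism of cover monoids compatible with
the projections and preserving greatest `σ`-class elements is induced by a group
homomorphism `f : G → H` with `μ₂ ∘ f = λ ∘ μ₁`. -/
theorem stmt18 {G H : Type*} [Group G] [Group H]
    (μ₁ : G → ℝ) (U : Set ℝ) (μ₂ : H → ℝ) (V : Set ℝ)
    (h₁ : IsFuzzySubgroup μ₁ U) (h₂ : IsFuzzySubgroup μ₂ V)
    (l : ℝ → ℝ)
    (hlmap : ∀ u ∈ U, l u ∈ V)
    (hlmono : ∀ u ∈ U, ∀ v ∈ U, u ≤ v → l u ≤ l v)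
    (hl1 : l (μ₁ (1 : G)) = μ₂ (1 : H))
    (g : ℝ × G → ℝ × H)
    (hgC : ∀ p : ℝ × G, inCover μ₁ U p → inCover μ₂ V (g p))
    (hghom : ∀ p q : ℝ × G, inCover μ₁ U p → inCover μ₁ U q →
      g (cmul p q) = cmul (g p) (g q))
    (hg1 : g (μ₁ (1 : G), (1 : G)) = (μ₂ (1 : H), (1 : H)))
    (hgφ : ∀ p : ℝ × G, inCover μ₁ U p → (g p).1 = l p.1)
    (hgmax : ∀ x : G, ∃ x' : H, g (μ₁ x, x) = (μ₂ x', x')) :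
    ∃ f : G → H, f 1 = 1 ∧ (∀ x y : G, f (x * y) = f x * f y) ∧
      (∀ x : G, μ₂ (f x) = l (μ₁ x)) ∧
      (∀ p : ℝ × G, inCover μ₁ U p → g p = (l p.1, f p.2)) := by
  obtain ⟨-, hU, hsurj, hmul, hinv⟩ := h₁
  have hle : ∀ u ∈ U, u ≤ μ₁ 1 := by
    intro u hu
    obtain ⟨y, rfl⟩ := hsurj u hu
    have h := hmul y y⁻¹
    rwa [hinv, min_self, mul_inv_cancel] at h
  have hone : ∀ u ∈ U, (g (u, 1)).2 = 1 := by
    intro u hu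
    have hc : inCover μ₁ U (u, (1 : G)) := ⟨hu, hle u hu⟩
    have h := congrArg Prod.snd (hghom _ _ hc hc)
    simpa [cmul] using h
  have hmax : ∀ x, inCover μ₁ U (μ₁ x, x) := fun x => ⟨hU x, le_refl _⟩
  have key : ∀ p : ℝ × G, inCover μ₁ U p → (g p).2 = (g (μ₁ p.2, p.2)).2 := by
    rintro ⟨u, x⟩ ⟨hu, hux⟩
    have h := congrArg Prod.snd (hghom (u, 1) (μ₁ x, x) ⟨hu, hle u hu⟩ (hmax x))
    simp only [cmul, one_mul, hone u hu] at h hux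
    rwa [min_eq_left hux] at h
  refine ⟨fun x => (g (μ₁ x, x)).2, by simp [hg1], ?_, ?_, ?_⟩
  · intro x y
    have h := congrArg Prod.snd (hghom _ _ (hmax x) (hmax y))
    have hc : inCover μ₁ U (min (μ₁ x) (μ₁ y), x * y) := by
      refine ⟨?_, hmul x y⟩
      rcases min_choice (μ₁ x) (μ₁ y) with h | h <;> simp only [h, hU]
    have h2 := key _ hc
    exact h2.symm.trans h
  · intro x
    obtain ⟨x', hx'⟩ := hgmax x
    have h := hgφ _ (hmax x)
    simp only [hx'] at h ⊢
    exact h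
  · intro p hp
    exact Prod.ext (hgφ p hp) (key p hp)
end
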